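/- Let S = (F^•, E^•, I^•) be a general spark complex and k ≥ 0, and let G be the mapping cone complex of Ψ : I^• → F^•, so that H^k(G) is the group of pairs (a, r) ∈ F^k ⊕ I^{k+1} with dr = 0 and da = −Ψ(r), modulo pairs of the form (db + Ψ(s), −ds). Then there is a short exact sequence 0 → H^k(E^•)/H^k_I(E^•) → H^k(G) → Ker^{k+1}(I^•) → 0, where Ker^{k+1}(I^•) = ker(Ψ_* : H^{k+1}(I^•) → H^{k+1}(F^•)), the surjection sends the class of (a, r) to [r], and the first map sends the class of a d-closed α ∈ E^k (viewed in F^k) to the class of (α, 0). -/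

import Mathlib

open AddSubgroup

noncomputable section

/-- Coboundaries of an `ℕ`-indexed cochain complex, with the convention
`B^0 = 0` (i.e. `d : F^{-1} = 0 → F^0`). -/
def Bc {E : ℕ → Type*} [∀ i, AddCommGroup (E i)] (d : ∀ k, E k →+ E (k+1)) :
    ∀ k, AddSubgroup (E k)
  | 0 => ⊥
  | n+1 => (d n).range

/-- Cohomology of an `ℕ`-indexed cochain complex. -/
abbrev Hc {E : ℕ → Type*} [∀ i, AddCommGroup (E i)] (d : ∀ k, E k →+ E (k+1)) (k : ℕ) :=
  ↥(d k).ker ⧸ ((Bc d k).addSubgroupOf (d k).ker)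

/-- The class of a cocycle in cohomology. -/
def Hmk {E : ℕ → Type*} [∀ i, AddCommGroup (E i)] (d : ∀ k, E k →+ E (k+1)) (k : ℕ) :
    ↥(d k).ker →+ Hc d k := QuotientAddGroup.mk' _

section Spark

variable {F E Ic : ℕ → Type*}
  [∀ i, AddCommGroup (F i)] [∀ i, AddCommGroup (E i)] [∀ i, AddCommGroup (Ic i)]

/-- The group of general sparks of degree `k` of a general spark complex
`(F^•, E^•, I^•)`: triples `(a, e, r)` with `da = e - Ψ(r)` (inside `F^{k+1}`,
via the embedding `j : E^• ↪ F^•`) and `dr = 0`. -/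
def Sparks (dF : ∀ k, F k →+ F (k+1)) (dI : ∀ k, Ic k →+ Ic (k+1))
    (Ψ : ∀ k, Ic k →+ F k) (j : ∀ k, E k →+ F k) (k : ℕ) :
    AddSubgroup (F k × E (k+1) × Ic (k+1)) where
  carrier := {p | dF k p.1 = j (k+1) p.2.1 - Ψ (k+1) p.2.2 ∧ dI (k+1) p.2.2 = 0}
  add_mem' := by
    rintro p q ⟨h1, h2⟩ ⟨h1', h2'⟩
    refine ⟨?_, ?_⟩ <;> simp [Prod.fst_add, Prod.snd_add, h1, h1', h2, h2'] <;> abel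
  zero_mem' := by simp
  neg_mem' := by
    rintro p ⟨h1, h2⟩
    refine ⟨?_, ?_⟩ <;> simp [Prod.fst_neg, Prod.snd_neg, h1, h2] <;> abel

/-- The subgroup of sparks equivalent to `0`: a spark `(a, e, r)` is trivial when there
are `b ∈ F^{k-1}` and `s ∈ I^k` with `a = db + Ψ(s)` and `r = -ds`. -/
def SparkRel (dF : ∀ k, F k →+ F (k+1)) (dI : ∀ k, Ic k →+ Ic (k+1))
    (Ψ : ∀ k, Ic k →+ F k) (j : ∀ k, E k →+ F k) (k : ℕ) :
    AddSubgroup ↥(Sparks dF dI Ψ j k) where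
  carrier := {p | ∃ s : Ic k,
      (p : F k × E (k+1) × Ic (k+1)).1 - Ψ k s ∈ Bc dF k ∧
      (p : F k × E (k+1) × Ic (k+1)).2.2 = -(dI k s)}
  add_mem' := by
    rintro p q ⟨s, hs1, hs2⟩ ⟨t, ht1, ht2⟩
    refine ⟨s + t, ?_, ?_⟩
    · have := add_mem hs1 ht1
      simpa [Prod.fst_add, map_add, add_sub_add_comm] using this
    · simp [Prod.snd_add, hs2, ht2]
      abel
  zero_mem' := ⟨0, by simp [zero_mem], by simp⟩
  neg_mem' := by
    rintro p ⟨s, hs1, hs2⟩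
    refine ⟨-s, ?_, ?_⟩
    · have := neg_mem hs1
      simpa [Prod.fst_neg, map_neg, neg_sub, sub_eq_add_neg, add_comm] using this
    · simp [Prod.snd_neg, hs2]
  
/-- The group `Ĥ^k(𝒮)` of spark classes of degree `k`. -/
abbrev SparkH (dF : ∀ k, F k →+ F (k+1)) (dI : ∀ k, Ic k →+ Ic (k+1))
    (Ψ : ∀ k, Ic k →+ F k) (j : ∀ k, E k →+ F k) (k : ℕ) :=
  ↥(Sparks dF dI Ψ j k) ⧸ SparkRel dF dI Ψ j k

/-- The class of a spark in `Ĥ^k(𝒮)`. -/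
def sparkMk (dF : ∀ k, F k →+ F (k+1)) (dI : ∀ k, Ic k →+ Ic (k+1))
    (Ψ : ∀ k, Ic k →+ F k) (j : ∀ k, E k →+ F k) (k : ℕ) :
    ↥(Sparks dF dI Ψ j k) →+ SparkH dF dI Ψ j k :=
  QuotientAddGroup.mk' _

end Spark


section Cone

variable {F E Ic : ℕ → Type*}
  [∀ i, AddCommGroup (F i)] [∀ i, AddCommGroup (E i)] [∀ i, AddCommGroup (Ic i)]

/-- Degree-`k` cocycles of the mapping cone of `Ψ : I^• → F^•`: pairs
`(a, r) ∈ F^k ⊕ I^{k+1}` with `dr = 0` and `da = -Ψ(r)`. -/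
def Cone (dF : ∀ k, F k →+ F (k+1)) (dI : ∀ k, Ic k →+ Ic (k+1))
    (Ψ : ∀ k, Ic k →+ F k) (k : ℕ) : AddSubgroup (F k × Ic (k+1)) where
  carrier := {p | dI (k+1) p.2 = 0 ∧ dF k p.1 = -(Ψ (k+1) p.2)}
  add_mem' := by
    rintro p q ⟨h1, h2⟩ ⟨h1', h2'⟩
    refine ⟨?_, ?_⟩ <;> simp [Prod.fst_add, Prod.snd_add, h1, h1', h2, h2'] <;> abel
  zero_mem' := by simp
  neg_mem' := by
    rintro p ⟨h1, h2⟩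
    refine ⟨?_, ?_⟩ <;> simp [Prod.fst_neg, Prod.snd_neg, h1, h2]

/-- Degree-`k` coboundaries of the mapping cone of `Ψ : I^• → F^•`: the subgroup of
cone cocycles of the form `(db + Ψ(s), -ds)` with `(b, s) ∈ F^{k-1} ⊕ I^k`. -/
def ConeRel (dF : ∀ k, F k →+ F (k+1)) (dI : ∀ k, Ic k →+ Ic (k+1))
    (Ψ : ∀ k, Ic k →+ F k) (k : ℕ) : AddSubgroup ↥(Cone dF dI Ψ k) where
  carrier := {p | ∃ s : Ic k,
      (p : F k × Ic (k+1)).1 - Ψ k s ∈ Bc dF k ∧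
      (p : F k × Ic (k+1)).2 = -(dI k s)}
  add_mem' := by
    rintro p q ⟨s, hs1, hs2⟩ ⟨t, ht1, ht2⟩
    refine ⟨s + t, ?_, ?_⟩
    · have := add_mem hs1 ht1
      simpa [Prod.fst_add, map_add, add_sub_add_comm] using this
    · simp [Prod.snd_add, hs2, ht2]
      abel
  zero_mem' := ⟨0, by simp [zero_mem], by simp⟩
  neg_mem' := by
    rintro p ⟨s, hs1, hs2⟩
    refine ⟨-s, ?_, ?_⟩
    · have := neg_mem hs1
      simpa [Prod.fst_neg, map_neg, neg_sub, sub_eq_add_neg, add_comm] using this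
    · simp [Prod.snd_neg, hs2]

/-- The degree-`k` cohomology `H^k(G)` of the mapping cone `G` of `Ψ : I^• → F^•`. -/
abbrev ConeH (dF : ∀ k, F k →+ F (k+1)) (dI : ∀ k, Ic k →+ Ic (k+1))
    (Ψ : ∀ k, Ic k →+ F k) (k : ℕ) :=
  ↥(Cone dF dI Ψ k) ⧸ ConeRel dF dI Ψ k

/-- The class in `H^k(G)` of a cocycle of the mapping cone. -/
def coneMk (dF : ∀ k, F k →+ F (k+1)) (dI : ∀ k, Ic k →+ Ic (k+1))
    (Ψ : ∀ k, Ic k →+ F k) (k : ℕ) : ↥(Cone dF dI Ψ k) →+ ConeH dF dI Ψ k :=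
  QuotientAddGroup.mk' _

end Cone

/-!
The cone fits into the long exact sequence
`H^k(I) --Ψ_*--> H^k(F) --> H^k(G) --> H^{k+1}(I) --Ψ_*--> H^{k+1}(F)`, whose middle maps are
`[a] ↦ [(a, 0)]` and `[(a, r)] ↦ [r]`. Precomposing the first of these with the isomorphism
`H^k(E) ≅ H^k(F)` gives a map with the same image, whose kernel corresponds to the image of `Ψ_*`.
-/

section Cohomology

variable {A B : ℕ → Type*} [∀ i, AddCommGroup (A i)] [∀ i, AddCommGroup (B i)]
  {dA : ∀ k, A k →+ A (k + 1)} {dB : ∀ k, B k →+ B (k + 1)}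

lemma Hmk_surjective (dA : ∀ k, A k →+ A (k + 1)) (k : ℕ) : Function.Surjective (Hmk dA k) :=
  QuotientAddGroup.mk'_surjective _

lemma Hmk_eq_zero_iff {k : ℕ} (z : (dA k).ker) : Hmk dA k z = 0 ↔ (z : A k) ∈ Bc dA k :=
  QuotientAddGroup.eq_zero_iff z

lemma Hmk_eq_iff_sub_mem {k : ℕ} (z w : (dA k).ker) :
    Hmk dA k z = Hmk dA k w ↔ (w - z : A k) ∈ Bc dA k := by
  rw [eq_comm, ← sub_eq_zero, ← map_sub, Hmk_eq_zero_iff, AddSubgroup.coe_sub]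

variable (φ : ∀ k, A k →+ B k) (hφ : ∀ k x, φ (k + 1) (dA k x) = dB k (φ k x))

include hφ in
lemma map_mem_Bc {k : ℕ} {x : A k} (hx : x ∈ Bc dA k) : φ k x ∈ Bc dB k := by
  cases k with
  | zero =>
    obtain rfl : x = 0 := hx
    exact (map_zero (φ 0)).symm ▸ zero_mem _
  | succ n =>
    obtain ⟨y, rfl⟩ := hx
    exact ⟨φ n y, (hφ n y).symm⟩

/-- The restriction of a cochain map to cocycles. -/
def cocycleMap (k : ℕ) : (dA k).ker →+ (dB k).ker :=
  ((φ k).comp (dA k).ker.subtype).codRestrict (dB k).ker fun z => by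
    have hz : dA k z = 0 := z.2
    simp [AddMonoidHom.mem_ker, ← hφ, hz]

/-- The map `φ_* : H^k(A) → H^k(B)` induced on cohomology by a cochain map. -/
def cohomologyMap (k : ℕ) : Hc dA k →+ Hc dB k :=
  QuotientAddGroup.map _ _ (cocycleMap φ hφ k) fun _ hz => map_mem_Bc φ hφ hz

lemma cohomologyMap_Hmk {k : ℕ} (z : (dA k).ker) :
    cohomologyMap φ hφ k (Hmk dA k z) = Hmk dB k (cocycleMap φ hφ k z) :=
  rfl

lemma Hmk_mem_range_cohomologyMap_iff {k : ℕ} (z : (dB k).ker) :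
    Hmk dB k z ∈ Set.range (cohomologyMap φ hφ k) ↔
      ∃ u, dA k u = 0 ∧ (z : B k) - φ k u ∈ Bc dB k := by
  rw [← (Hmk_surjective dA k).range_comp]
  simp only [Set.mem_range, Function.comp_apply, cohomologyMap_Hmk, Hmk_eq_iff_sub_mem]
  exact ⟨fun ⟨u, hu⟩ => ⟨u, u.2, hu⟩, fun ⟨u, hu, hzu⟩ => ⟨⟨u, hu⟩, hzu⟩⟩

lemma cohomologyMap_surjective {k : ℕ}
    (h : ∀ b, dB k b = 0 → ∃ a, dA k a = 0 ∧ b - φ k a ∈ Bc dB k) :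
    Function.Surjective (cohomologyMap φ hφ k) := by
  intro x
  obtain ⟨z, rfl⟩ := Hmk_surjective dB k x
  exact (Hmk_mem_range_cohomologyMap_iff φ hφ z).2 (h z z.2)

end Cohomology

section ConeSequence

variable {F Ic : ℕ → Type*} [∀ i, AddCommGroup (F i)] [∀ i, AddCommGroup (Ic i)]
  (dF : ∀ k, F k →+ F (k + 1)) (dI : ∀ k, Ic k →+ Ic (k + 1)) (Ψ : ∀ k, Ic k →+ F k) (k : ℕ)

lemma coneMk_surjective : Function.Surjective (coneMk dF dI Ψ k) :=
  QuotientAddGroup.mk'_surjective _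

variable {dF dI Ψ k} in
lemma coneMk_eq_zero_iff (p : Cone dF dI Ψ k) :
    coneMk dF dI Ψ k p = 0 ↔ ∃ s, p.1.1 - Ψ k s ∈ Bc dF k ∧ p.1.2 = -dI k s :=
  QuotientAddGroup.eq_zero_iff p

/-- The inclusion `a ↦ (a, 0)` of the cocycles of `F` into those of the cone. -/
def coneCocycleInl : (dF k).ker →+ Cone dF dI Ψ k :=
  ((AddMonoidHom.inl (F k) (Ic (k + 1))).comp (dF k).ker.subtype).codRestrict (Cone dF dI Ψ k)
    fun a => by
      have ha : dF k a = 0 := a.2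
      exact ⟨map_zero _, by simp [ha]⟩

@[simp]
lemma coe_coneCocycleInl (a : (dF k).ker) :
    (coneCocycleInl dF dI Ψ k a : F k × Ic (k + 1)) = (↑a, 0) :=
  rfl

/-- The map `H^k(F) → H^k(G)`, `[a] ↦ [(a, 0)]`, into the cohomology of the cone. -/
def coneInl : Hc dF k →+ ConeH dF dI Ψ k :=
  QuotientAddGroup.map _ _ (coneCocycleInl dF dI Ψ k) fun a (ha : (a : F k) ∈ Bc dF k) =>
    ⟨0, by simpa using ha, by simp⟩

/-- The projection `(a, r) ↦ r` from the cocycles of the cone to those of `I`. -/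
def coneCocycleSnd : Cone dF dI Ψ k →+ (dI (k + 1)).ker :=
  ((AddMonoidHom.snd (F k) (Ic (k + 1))).comp (Cone dF dI Ψ k).subtype).codRestrict
    (dI (k + 1)).ker fun p => p.2.1

/-- The map `H^k(G) → H^{k+1}(I)`, `[(a, r)] ↦ [r]`, from the cohomology of the cone. -/
def coneSnd : ConeH dF dI Ψ k →+ Hc dI (k + 1) :=
  QuotientAddGroup.map _ _ (coneCocycleSnd dF dI Ψ k) fun _ ⟨s, _, hs⟩ =>
    ⟨-s, (map_neg _ s).trans hs.symm⟩

variable {dF dI Ψ k}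

lemma coneInl_Hmk (a : (dF k).ker) :
    coneInl dF dI Ψ k (Hmk dF k a) = coneMk dF dI Ψ k (coneCocycleInl dF dI Ψ k a) :=
  rfl

lemma coneSnd_coneMk (p : Cone dF dI Ψ k) :
    coneSnd dF dI Ψ k (coneMk dF dI Ψ k p) = Hmk dI (k + 1) (coneCocycleSnd dF dI Ψ k p) :=
  rfl

lemma coneSnd_coneInl (x : Hc dF k) : coneSnd dF dI Ψ k (coneInl dF dI Ψ k x) = 0 := by
  obtain ⟨a, rfl⟩ := Hmk_surjective dF k x
  rw [coneInl_Hmk, coneSnd_coneMk, Hmk_eq_zero_iff]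
  exact zero_mem _

variable (hΨ : ∀ k x, Ψ (k + 1) (dI k x) = dF k (Ψ k x))

theorem exact_cohomologyMap_coneInl :
    Function.Exact (cohomologyMap Ψ hΨ k) (coneInl dF dI Ψ k) := by
  intro x
  obtain ⟨a, rfl⟩ := Hmk_surjective dF k x
  rw [coneInl_Hmk, coneMk_eq_zero_iff, Hmk_mem_range_cohomologyMap_iff]
  refine exists_congr fun s => and_comm.trans (and_congr_left fun _ => ?_)
  exact eq_comm.trans neg_eq_zero

include hΨ in
theorem exact_coneInl_coneSnd :
    Function.Exact (coneInl dF dI Ψ k) (coneSnd dF dI Ψ k) := by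
  intro x
  refine ⟨fun hx => ?_, fun ⟨y, hy⟩ => hy ▸ coneSnd_coneInl y⟩
  obtain ⟨⟨⟨a, r⟩, _, har⟩, rfl⟩ := coneMk_surjective dF dI Ψ k x
  obtain ⟨s, rfl⟩ : r ∈ (dI k).range := (Hmk_eq_zero_iff _).1 hx
  -- Adding the coboundary `(Ψ s, -ds)` to `(a, ds)` gives `(a + Ψ s, 0)`.
  have hclosed : dF k (a + Ψ k s) = 0 := by
    rw [map_add, har, ← hΨ, neg_add_cancel]
  refine ⟨Hmk dF k ⟨a + Ψ k s, hclosed⟩, ?_⟩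
  rw [coneInl_Hmk, ← sub_eq_zero, ← map_sub, coneMk_eq_zero_iff]
  exact ⟨s, by simp, by simp⟩

theorem exact_coneSnd_cohomologyMap :
    Function.Exact (coneSnd dF dI Ψ k) (cohomologyMap Ψ hΨ (k + 1)) := by
  intro x
  constructor
  · intro hx
    obtain ⟨u, rfl⟩ := Hmk_surjective dI (k + 1) x
    obtain ⟨b, hb⟩ : Ψ (k + 1) u ∈ (dF k).range := (Hmk_eq_zero_iff _).1 hx
    exact ⟨coneMk dF dI Ψ k ⟨(-b, u), u.2, (map_neg _ b).trans (congrArg _ hb)⟩, rfl⟩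
  · rintro ⟨y, rfl⟩
    obtain ⟨⟨⟨a, r⟩, _, har⟩, rfl⟩ := coneMk_surjective dF dI Ψ k y
    rw [coneSnd_coneMk, cohomologyMap_Hmk, Hmk_eq_zero_iff]
    exact ⟨-a, (map_neg _ a).trans (neg_eq_iff_eq_neg.2 har)⟩

end ConeSequence

theorem statement14_general {F E Ic : ℕ → Type*}
    [∀ i, AddCommGroup (F i)] [∀ i, AddCommGroup (E i)] [∀ i, AddCommGroup (Ic i)]
    {dF : ∀ k, F k →+ F (k + 1)} {dE : ∀ k, E k →+ E (k + 1)} {dI : ∀ k, Ic k →+ Ic (k + 1)}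
    {Ψ : ∀ k, Ic k →+ F k} (hΨ : ∀ k x, Ψ (k + 1) (dI k x) = dF k (Ψ k x))
    {j : ∀ k, E k →+ F k} (hj : ∀ k x, j (k + 1) (dE k x) = dF k (j k x))
    {k : ℕ} (hsurj : Function.Surjective (cohomologyMap j hj k)) :
    ∃ (ι : Hc dE k →+ ConeH dF dI Ψ k)
      (π : ConeH dF dI Ψ k →+ Hc dI (k + 1)),
      (∀ (α : E k) (hα : α ∈ (dE k).ker),
          ∃ hc : ((j k α, 0) : F k × Ic (k + 1)) ∈ Cone dF dI Ψ k,
            ι (Hmk dE k ⟨α, hα⟩) = coneMk dF dI Ψ k ⟨(j k α, 0), hc⟩) ∧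
      (∀ (α : E k) (hα : α ∈ (dE k).ker),
          ι (Hmk dE k ⟨α, hα⟩) = 0 ↔
            ∃ u : Ic k, dI k u = 0 ∧ j k α - Ψ k u ∈ Bc dF k) ∧
      (∀ (p : ↥(Cone dF dI Ψ k)) (hr : (p : F k × Ic (k + 1)).2 ∈ (dI (k + 1)).ker),
          π (coneMk dF dI Ψ k p) = Hmk dI (k + 1) ⟨(p : F k × Ic (k + 1)).2, hr⟩) ∧
      (∀ x, π x = 0 ↔ x ∈ ι.range) ∧
      (∀ (u : Ic (k + 1)) (hu : u ∈ (dI (k + 1)).ker),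
          (∃ x, π x = Hmk dI (k + 1) ⟨u, hu⟩) ↔ Ψ (k + 1) u ∈ Bc dF (k + 1)) := by
  refine ⟨(coneInl dF dI Ψ k).comp (cohomologyMap j hj k), coneSnd dF dI Ψ k, ?_, ?_, ?_, ?_, ?_⟩
  · exact fun α hα => ⟨(coneCocycleInl dF dI Ψ k (cocycleMap j hj k ⟨α, hα⟩)).2, rfl⟩
  · exact fun α hα => (exact_cohomologyMap_coneInl hΨ _).trans
      (Hmk_mem_range_cohomologyMap_iff Ψ hΨ (cocycleMap j hj k ⟨α, hα⟩))
  · exact fun p _ => coneSnd_coneMk p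
  · intro x
    rw [exact_coneInl_coneSnd hΨ x, ← hsurj.range_comp]
    rfl
  · exact fun u hu => (exact_coneSnd_cohomologyMap hΨ _).symm.trans
      (Hmk_eq_zero_iff (cocycleMap Ψ hΨ (k + 1) ⟨u, hu⟩))

/-- With `G` the mapping cone of `Ψ : I^• → F^•` and
`Ker^{k+1}(I^•) = ker (Ψ_* : H^{k+1}(I^•) → H^{k+1}(F^•))`, there is a short exact
sequence `0 → H^k(E^•)/H^k_I(E^•) → H^k(G) → Ker^{k+1}(I^•) → 0`, where the surjection
sends the class of `(a, r)` to `[r]` and the first map sends the class of a `d`-closed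
`α ∈ E^k` (viewed in `F^k`) to the class of `(α, 0)`. -/
theorem statement14
    (F E Ic : ℕ → Type*)
    [∀ i, AddCommGroup (F i)] [∀ i, AddCommGroup (E i)] [∀ i, AddCommGroup (Ic i)]
    (dF : ∀ k, F k →+ F (k+1)) (hdF : ∀ k x, dF (k+1) (dF k x) = 0)
    (dE : ∀ k, E k →+ E (k+1)) (hdE : ∀ k x, dE (k+1) (dE k x) = 0)
    (dI : ∀ k, Ic k →+ Ic (k+1)) (hdI : ∀ k x, dI (k+1) (dI k x) = 0)
    (Ψ : ∀ k, Ic k →+ F k) (hΨ : ∀ k x, Ψ (k+1) (dI k x) = dF k (Ψ k x))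
    (j : ∀ k, E k →+ F k) (hj : ∀ k x, j (k+1) (dE k x) = dF k (j k x))
    (hjinj : ∀ k, Function.Injective (j k))
    (hiso_inj : ∀ (k : ℕ) (e : E k), dE k e = 0 → j k e ∈ Bc dF k → e ∈ Bc dE k)
    (hiso_surj : ∀ (k : ℕ) (a : F k), dF k a = 0 →
      ∃ e : E k, dE k e = 0 ∧ a - j k e ∈ Bc dF k)
    (k : ℕ) :
    ∃ (ι : Hc dE k →+ ConeH dF dI Ψ k)
      (π : ConeH dF dI Ψ k →+ Hc dI (k+1)),
      (∀ (α : E k) (hα : α ∈ (dE k).ker),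
          ∃ hc : ((j k α, 0) : F k × Ic (k+1)) ∈ Cone dF dI Ψ k,
            ι (Hmk dE k ⟨α, hα⟩) = coneMk dF dI Ψ k ⟨(j k α, 0), hc⟩) ∧
      (∀ (α : E k) (hα : α ∈ (dE k).ker),
          ι (Hmk dE k ⟨α, hα⟩) = 0 ↔
            ∃ u : Ic k, dI k u = 0 ∧ j k α - Ψ k u ∈ Bc dF k) ∧
      (∀ (p : ↥(Cone dF dI Ψ k)) (hr : (p : F k × Ic (k+1)).2 ∈ (dI (k+1)).ker),
          π (coneMk dF dI Ψ k p) = Hmk dI (k+1) ⟨(p : F k × Ic (k+1)).2, hr⟩) ∧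
      (∀ x, π x = 0 ↔ x ∈ ι.range) ∧
      (∀ (u : Ic (k+1)) (hu : u ∈ (dI (k+1)).ker),
          (∃ x, π x = Hmk dI (k+1) ⟨u, hu⟩) ↔ Ψ (k+1) u ∈ Bc dF (k+1)) :=
  statement14_general hΨ hj (cohomologyMap_surjective j hj (hiso_surj k))

end
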